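/- For every integer n ≥ 2 and every edge e of the n-dimensional varietal hypercube VQ_n, and every integer ℓ with 4 ≤ ℓ ≤ 2^n and ℓ ≠ 5, there is a cycle of length ℓ in VQ_n containing the edge e. In particular, VQ_n is 6-edge-pancyclic for n ≥ 3. -/

import Mathlib

/-- The relation `I = {(00,00),(01,01),(10,11),(11,10)}` on pairs of bits,
where a pair `(a, b)` records two consecutive bits (higher bit first). -/
def vqCross (p q : Bool × Bool) : Prop :=
  (p = (false, false) ∧ q = (false, false)) ∨
  (p = (false, true) ∧ q = (false, true)) ∨
  (p = (true, false) ∧ q = (true, true)) ∨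
  (p = (true, true) ∧ q = (true, false))

/-- Adjacency in the varietal hypercube `VQ n`.  A vertex is a function
`Fin n → Bool`, the bit `x_k` (1-indexed, `x = x_n x_{n-1} ⋯ x_1`) being
the value at index `k - 1`; the leading bit `x_n` is at index `n - 1`. -/
def vqAdj : (n : ℕ) → (Fin n → Bool) → (Fin n → Bool) → Prop
  | 0, _, _ => False
  | 1, x, y => x ≠ y
  | (n + 2), x, y =>
    if x (Fin.last (n + 1)) = y (Fin.last (n + 1)) then
      -- both in the same copy of `VQ (n+1)`
      vqAdj (n + 1) (fun i => x i.castSucc) (fun i => y i.castSucc)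
    else
      if 3 ∣ (n + 2) then
        (∀ i : Fin (n + 2), i.val < n - 1 → x i = y i) ∧
        vqCross (x ⟨n, by omega⟩, x ⟨n - 1, by omega⟩)
          (y ⟨n, by omega⟩, y ⟨n - 1, by omega⟩)
      else
        ∀ i : Fin (n + 1), x i.castSucc = y i.castSucc

/-- The `n`-dimensional varietal hypercube `VQ_n`. -/
def varietalCube (n : ℕ) : SimpleGraph (Fin n → Bool) :=
  SimpleGraph.fromRel (vqAdj n)

/-!
The twisted edges of `VQ_n` only involve the three bits of one block `x_{3j} x_{3j-1} x_{3j-2}`, so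
`VQ_{3+k}` is the box product of `VQ_3`, which is the Wagner graph, and `VQ_k`. Finding a cycle
through an edge amounts to joining its ends by a path of prescribed length, and such paths lift from
the factors to the product by induction. For an edge inside a fibre of `VQ_3`, the first step of a
path within the fibre is replaced by a detour through the fibres over a path of `VQ_k`. For an edge
between two fibres, one moves along an edge of the first fibre, crosses, and comes back through the
other fibres. As the ends of an edge need not be joined by paths of length `2` or `4`, this misses
the length `6 = 2 + 1 + 3`, for which one walks two steps before crossing and returns along the
other three sides of a pentagon.
-/

open SimpleGraph

section Paths

variable {V W : Type*} {G : SimpleGraph V} {H : SimpleGraph W} {s t : Set V} {u v w : V} {m k : ℕ}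

/-- There is a path of length `m` from `u` to `v` in `G` all of whose vertices lie in `s`. -/
def HasPathIn (G : SimpleGraph V) (s : Set V) (u v : V) (m : ℕ) : Prop :=
  ∃ p : G.Walk u v, p.IsPath ∧ p.length = m ∧ ∀ x ∈ p.support, x ∈ s

namespace HasPathIn

lemma nil (hu : u ∈ s) : HasPathIn G s u u 0 :=
  ⟨.nil, .nil, rfl, by simpa⟩

lemma of_adj (h : G.Adj u v) : HasPathIn G Set.univ u v 1 :=
  ⟨h.toWalk, h.isPath_toWalk, rfl, fun _ _ => trivial⟩

lemma of_isChain_nodup {l : List V} (hl : l.IsChain G.Adj ∧ l.Nodup) (hne : l ≠ []) :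
    HasPathIn G Set.univ (l.head hne) (l.getLast hne) (l.length - 1) := by
  refine ⟨.ofSupport l hne hl.1, ?_, ?_, fun _ _ => trivial⟩
  · rw [Walk.isPath_def, Walk.support_ofSupport]
    exact hl.2
  · have := (Walk.ofSupport l hne hl.1).length_support
    rw [Walk.support_ofSupport] at this
    omega

lemma mono (hst : s ⊆ t) : HasPathIn G s u v m → HasPathIn G t u v m := by
  rintro ⟨p, hp, hm, hs⟩
  exact ⟨p, hp, hm, fun x hx => hst (hs x hx)⟩

lemma reverse : HasPathIn G s u v m → HasPathIn G s v u m := by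
  rintro ⟨p, hp, rfl, hs⟩
  exact ⟨p.reverse, hp.reverse, p.length_reverse, by simpa using hs⟩

lemma map (f : G ↪g H) : HasPathIn G s u v m → HasPathIn H (f '' s) (f u) (f v) m := by
  rintro ⟨p, hp, rfl, hs⟩
  refine ⟨p.map f.toHom, hp.map f.injective, p.length_map _, ?_⟩
  simp only [Walk.support_map, List.forall_mem_map]
  exact fun x hx => Set.mem_image_of_mem f (hs x hx)

lemma start_mem : HasPathIn G s u v m → u ∈ s := by
  rintro ⟨p, -, -, hs⟩
  exact hs u p.start_mem_support

lemma exists_adj : HasPathIn G s u v (m + 1) → ∃ w, G.Adj u w ∧ HasPathIn G (s \ {u}) w v m := by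
  rintro ⟨_ | ⟨h, p⟩, hp, hm, hs⟩
  · simp at hm
  rw [Walk.cons_isPath_iff] at hp
  refine ⟨_, h, p, hp.1, by simpa using hm, fun x hx => ⟨hs x (by simp [hx]), ?_⟩⟩
  rintro rfl
  exact hp.2 hx

lemma join {x y : V} (hp : HasPathIn G s u v m) (h : G.Adj v x) (hq : HasPathIn G t x y k)
    (hst : Disjoint s t) : HasPathIn G (s ∪ t) u y (m + 1 + k) := by
  obtain ⟨p, hp, rfl, hs⟩ := hp
  obtain ⟨q, hq, rfl, ht⟩ := hq
  have hsupp : (p.append (.cons h q)).support = p.support ++ q.support := by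
    simp [Walk.support_append]
  refine ⟨p.append (.cons h q), ?_, by simp; omega, fun z hz => ?_⟩
  · rw [Walk.isPath_def, hsupp]
    exact hp.support_nodup.append hq.support_nodup
      fun z hz hz' => Set.disjoint_left.1 hst (hs z hz) (ht z hz')
  · rw [hsupp, List.mem_append] at hz
    exact hz.imp (hs z) (ht z)

lemma exists_isCycle (h : G.Adj u v) (hm : 2 ≤ m) (hp : HasPathIn G s u v m) :
    ∃ (w : V) (C : G.Walk w w), C.IsCycle ∧ C.length = m + 1 ∧ s(u, v) ∈ C.edges := by
  obtain ⟨p, hp, rfl, -⟩ := hp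
  refine ⟨v, .cons h.symm p, (Walk.cons_isCycle_iff _ _).2 ⟨hp, fun hvu => ?_⟩, by simp,
    by simp [Sym2.eq_swap]⟩
  have hsnd : p.getVert 1 = v := (hp.eq_snd_of_mem_edges (Sym2.eq_swap ▸ hvu)).symm
  have := (hp.getVert_eq_end_iff (by omega)).1 hsnd
  omega

end HasPathIn

end Paths

/-- The lengths below `M` other than `0`, `2` and `4`. A path of such a length `m ≥ 3` joining the
ends of an edge closes up to a cycle of length `m + 1`, so these `m` correspond to the cycle lengths
`ℓ ≤ M` with `ℓ ≥ 4` and `ℓ ≠ 5`; the length `1` of the edge itself is allowed so that paths along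
edges can be concatenated uniformly. -/
def edgePathLengths (M : ℕ) : Finset ℕ :=
  Finset.range M \ {0, 2, 4}

lemma mem_edgePathLengths {M m : ℕ} :
    m ∈ edgePathLengths M ↔ m < M ∧ m ≠ 0 ∧ m ≠ 2 ∧ m ≠ 4 := by
  simp [edgePathLengths]

lemma exists_add_one_add_of_mem_edgePathLengths {M N m : ℕ} (hM : 7 ≤ M) (hMN : M ≤ N)
    (hm : m ∈ edgePathLengths (M + N)) (h1 : m ≠ 1) (h6 : m ≠ 6) :
    ∃ i ∈ edgePathLengths M, ∃ j ∈ edgePathLengths N, i + 1 + j = m := by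
  simp only [mem_edgePathLengths] at *
  by_cases hmN : m ≤ N + 1
  · exact ⟨1, by omega, m - 2, by omega, by omega⟩
  by_cases hmM : m - M = 2 ∨ m - M = 4
  · exact ⟨M - 2, by omega, m - M + 1, by omega, by omega⟩
  · exact ⟨M - 1, by omega, m - M, by omega, by omega⟩

/-- The path form of near edge-pancyclicity: adjacent vertices of `G` are joined by paths of every
length in `edgePathLengths M`. -/
def HasEdgePaths {V : Type*} (G : SimpleGraph V) (M : ℕ) : Prop :=
  ∀ ⦃u v⦄, G.Adj u v → ∀ m ∈ edgePathLengths M, HasPathIn G Set.univ u v m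

/-- Every vertex `u` of `G` is joined to some vertex `w` by paths of lengths `2` and `3`, as on a
pentagon through `u`. The two paths need not be disjoint, as they will be placed in different fibres
of a product. -/
def HasPentagons {V : Type*} (G : SimpleGraph V) : Prop :=
  ∀ u, ∃ w, HasPathIn G Set.univ u w 2 ∧ HasPathIn G Set.univ w u 3

section Transport

variable {V W : Type*} {G : SimpleGraph V} {H : SimpleGraph W}

lemma HasEdgePaths.of_iso {M : ℕ} (hG : HasEdgePaths G M) (e : G ≃g H) : HasEdgePaths H M := by
  intro u v huv m hm
  have := (hG (e.symm.map_adj_iff.2 huv) m hm).map e.toEmbedding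
  exact (by simpa using this : HasPathIn H _ u v m).mono (Set.subset_univ _)

lemma HasPentagons.of_iso (hG : HasPentagons G) (e : G ≃g H) : HasPentagons H := by
  intro u
  obtain ⟨w, h2, h3⟩ := hG (e.symm u)
  refine ⟨e w, ?_, ?_⟩
  · exact (by simpa using h2.map e.toEmbedding : HasPathIn H _ u (e w) 2).mono (Set.subset_univ _)
  · exact (by simpa using h3.map e.toEmbedding : HasPathIn H _ (e w) u 3).mono (Set.subset_univ _)

end Transport

section BoxProduct

variable {V W : Type*} {G : SimpleGraph V} {H : SimpleGraph W} {M : ℕ}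

lemma HasPathIn.boxProdLeft {s : Set V} {t : Set W} {u v : V} {x : W} {m : ℕ}
    (hp : HasPathIn G s u v m) (hx : x ∈ t) : HasPathIn (G □ H) (s ×ˢ t) (u, x) (v, x) m :=
  (hp.map (G.boxProdLeft H x)).mono (by rintro _ ⟨y, hy, rfl⟩; exact ⟨hy, hx⟩)

-- The first edge of a path inside the fibre over `x` is replaced by a detour through the fibres
-- over the remaining vertices of a path of `H` starting at `x`.
lemma HasEdgePaths.boxProd_of_adj_left (hG : HasEdgePaths G M) (hM : 7 ≤ M) {u v : V}
    (huv : G.Adj u v) {k : ℕ} {t : Set W} {x z : W} (hq : HasPathIn H t x z k) {m : ℕ}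
    (hm : m ∈ edgePathLengths (M * (k + 1))) :
    HasPathIn (G □ H) (Set.univ ×ˢ t) (u, x) (v, x) m := by
  induction k generalizing t u v x m with
  | zero => exact (hG huv m (by simpa using hm)).boxProdLeft hq.start_mem
  | succ k ih =>
    rcases lt_or_ge m M with hmM | hmM
    · have hm' : m ∈ edgePathLengths M := by
        rw [mem_edgePathLengths] at hm ⊢
        exact ⟨hmM, hm.2⟩
      exact (hG huv m hm').boxProdLeft hq.start_mem
    obtain ⟨i, hi, j, hj, rfl⟩ : ∃ i ∈ edgePathLengths M, ∃ j ∈ edgePathLengths (M * (k + 1)),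
        i + 1 + j = m := by
      refine exists_add_one_add_of_mem_edgePathLengths hM (Nat.le_mul_of_pos_right M k.succ_pos)
        ?_ (by omega) (by omega)
      rwa [show M + M * (k + 1) = M * (k + 1 + 1) by ring]
    obtain ⟨i, rfl⟩ := Nat.exists_eq_succ_of_ne_zero (mem_edgePathLengths.1 hi).2.1
    obtain ⟨a, hua, hav⟩ := (hG huv _ hi).exists_adj
    obtain ⟨y, hxy, hq'⟩ := hq.exists_adj
    have hstart : HasPathIn (G □ H) ({u} ×ˢ {x}) (u, x) (u, x) 0 := .nil ⟨rfl, rfl⟩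
    have hdetour := ih hua hq' hj
    have hrest : HasPathIn (G □ H) ((Set.univ \ {u}) ×ˢ {x}) (a, x) (v, x) i := hav.boxProdLeft rfl
    have hpath := (hstart.join (boxProd_adj_right.2 hxy) hdetour ?_).join
      (boxProd_adj_right.2 hxy.symm) hrest ?_
    · convert hpath.mono (t := Set.univ ×ˢ t) ?_ using 1
      · omega
      · have hx : {x} ⊆ t := Set.singleton_subset_iff.2 hq.start_mem
        exact Set.union_subset (Set.union_subset (Set.prod_mono (Set.subset_univ _) hx)
          (Set.prod_mono subset_rfl Set.sdiff_subset)) (Set.prod_mono (Set.subset_univ _) hx)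
    · simp
    · simp [Set.disjoint_prod]

lemma HasEdgePaths.boxProd_of_adj_right (hG : HasEdgePaths G M) (hM : 7 ≤ M)
    (hG5 : HasPentagons G) {k : ℕ} {t : Set W} {x y z : W} (hxy : H.Adj x y) (hx : x ∉ t)
    (hq : HasPathIn H t y z k) (u : V) {m : ℕ} (hm : m ∈ edgePathLengths (M * (k + 2))) :
    HasPathIn (G □ H) Set.univ (u, x) (u, y) m := by
  have hadj (a : V) : (G □ H).Adj (a, x) (a, y) := boxProd_adj_right.2 hxy
  have hdisj : Disjoint (Set.univ ×ˢ {x} : Set (V × W)) (Set.univ ×ˢ t) :=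
    Set.disjoint_prod.2 (.inr (Set.disjoint_singleton_left.2 hx))
  obtain ⟨w, h2, h3⟩ := hG5 u
  obtain rfl | h1 := eq_or_ne m 1
  · exact .of_adj (hadj u)
  obtain rfl | h6 := eq_or_ne m 6
  · exact ((h2.boxProdLeft (Set.mem_singleton x)).join (hadj w)
      (h3.boxProdLeft hq.start_mem) hdisj).mono (Set.subset_univ _)
  obtain ⟨i, hi, j, hj, rfl⟩ : ∃ i ∈ edgePathLengths M, ∃ j ∈ edgePathLengths (M * (k + 1)),
      i + 1 + j = m := by
    refine exists_add_one_add_of_mem_edgePathLengths hM (Nat.le_mul_of_pos_right M k.succ_pos)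
      ?_ h1 h6
    rwa [show M + M * (k + 1) = M * (k + 2) by ring]
  obtain ⟨a, hua, -⟩ := h2.exists_adj
  exact (((hG hua i hi).boxProdLeft (Set.mem_singleton x)).join (hadj a)
    (hG.boxProd_of_adj_left hM hua.symm hq hj) hdisj).mono (Set.subset_univ _)

theorem HasEdgePaths.boxProd {N : ℕ} (hG : HasEdgePaths G M) (hM : 7 ≤ M) (hG5 : HasPentagons G)
    (hH : HasEdgePaths H N) (hN : N - 1 ∈ edgePathLengths N) (hH1 : ∀ x, ∃ y, H.Adj x y) :
    HasEdgePaths (G □ H) (M * N) := by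
  obtain ⟨k, rfl⟩ : ∃ k, N = k + 2 := ⟨N - 2, by rw [mem_edgePathLengths] at hN; omega⟩
  rintro ⟨u, x⟩ ⟨v, y⟩ huv m hm
  rcases boxProd_adj.1 huv with ⟨huv, rfl : x = y⟩ | ⟨hxy, rfl : u = v⟩
  · obtain ⟨y, hxy⟩ := hH1 x
    exact (hG.boxProd_of_adj_left hM huv (hH hxy _ hN) hm).mono (Set.subset_univ _)
  · obtain ⟨z, -, hq⟩ := (hH hxy _ hN).exists_adj
    exact hG.boxProd_of_adj_right hM hG5 hxy (by simp) hq.reverse u hm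

end BoxProduct

section Wagner

/-- The Wagner graph: the octagon on `ZMod 8` together with its four long diagonals. -/
abbrev wagnerGraph : SimpleGraph (ZMod 8) :=
  circulantGraph {1, 4}

lemma hasPathIn_wagnerGraph_add_one (u : ZMod 8) {m : ℕ} (hm : m ∈ edgePathLengths 8) :
    HasPathIn wagnerGraph Set.univ u (u + 1) m := by
  fin_cases hm
  · exact .of_isChain_nodup (l := [u, u + 1]) (by decide +revert) (by simp)
  · exact .of_isChain_nodup (l := [u, u + 4, u + 5, u + 1]) (by decide +revert) (by simp)
  · exact .of_isChain_nodup (l := [u, u + 7, u + 3, u + 4, u + 5, u + 1]) (by decide +revert)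
      (by simp)
  · exact .of_isChain_nodup (l := [u, u + 4, u + 3, u + 7, u + 6, u + 5, u + 1])
      (by decide +revert) (by simp)
  · exact .of_isChain_nodup (l := [u, u + 7, u + 6, u + 5, u + 4, u + 3, u + 2, u + 1])
      (by decide +revert) (by simp)

lemma hasPathIn_wagnerGraph_add_four (u : ZMod 8) {m : ℕ} (hm : m ∈ edgePathLengths 8) :
    HasPathIn wagnerGraph Set.univ u (u + 4) m := by
  fin_cases hm
  · exact .of_isChain_nodup (l := [u, u + 4]) (by decide +revert) (by simp)
  · exact .of_isChain_nodup (l := [u, u + 1, u + 5, u + 4]) (by decide +revert) (by simp)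
  · exact .of_isChain_nodup (l := [u, u + 1, u + 2, u + 6, u + 5, u + 4]) (by decide +revert)
      (by simp)
  · exact .of_isChain_nodup (l := [u, u + 1, u + 2, u + 6, u + 7, u + 3, u + 4])
      (by decide +revert) (by simp)
  · exact .of_isChain_nodup (l := [u, u + 1, u + 2, u + 3, u + 7, u + 6, u + 5, u + 4])
      (by decide +revert) (by simp)

lemma hasEdgePaths_wagnerGraph : HasEdgePaths wagnerGraph 8 := by
  intro u v huv m hm
  obtain rfl | rfl | rfl : v = u + 1 ∨ u = v + 1 ∨ v = u + 4 := by decide +revert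
  · exact hasPathIn_wagnerGraph_add_one u hm
  · exact (hasPathIn_wagnerGraph_add_one v hm).reverse
  · exact hasPathIn_wagnerGraph_add_four u hm

lemma hasPentagons_wagnerGraph : HasPentagons wagnerGraph := fun u =>
  ⟨u + 2, .of_isChain_nodup (l := [u, u + 1, u + 2]) (by decide +revert) (by simp),
    .of_isChain_nodup (l := [u + 2, u + 3, u + 4, u]) (by decide +revert) (by simp)⟩

end Wagner

section VarietalCube

instance decidableRelVqAdj : (n : ℕ) → DecidableRel (vqAdj n)
  | 0, _, _ => inferInstanceAs (Decidable False)
  | 1, x, y => inferInstanceAs (Decidable (x ≠ y))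
  | n + 2, x, y => by
    have := decidableRelVqAdj (n + 1)
    unfold vqAdj vqCross
    infer_instance

instance (n : ℕ) : DecidableRel (varietalCube n).Adj :=
  inferInstanceAs (DecidableRel (SimpleGraph.fromRel (vqAdj n)).Adj)

/-- The position on the octagon of the Wagner graph of a vertex of `VQ_3`. In the order `x₃x₂x₁` the
octagon is `000, 100, 110, 011, 001, 101, 111, 010`; the opposite of a vertex is obtained by
flipping `x₁`. -/
def wagnerLabel (x : Fin 3 → Bool) : ZMod 8 :=
  (if x 1 then (if x 2 then 2 else 7) else if x 2 then 1 else 0) + if x 0 then 4 else 0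

lemma wagnerLabel_bijective : Function.Bijective wagnerLabel := by decide

/-- The isomorphism from `VQ_3` onto the Wagner graph. -/
noncomputable def wagnerIso : varietalCube 3 ≃g wagnerGraph where
  toEquiv := .ofBijective wagnerLabel wagnerLabel_bijective
  map_rel_iff' {x y} := by
    change wagnerGraph.Adj (wagnerLabel x) (wagnerLabel y) ↔ _
    decide +revert

lemma hasEdgePaths_varietalCube_two : HasEdgePaths (varietalCube 2) 4 := by
  intro u v huv m hm
  fin_cases hm
  · exact .of_adj huv
  · exact .of_isChain_nodup (l := [u, fun i => !v i, fun i => !u i, v])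
      (by revert u v; decide) (by simp)

/-- The matching between the two copies of `VQ_n` in `VQ_{n+1}`: the identity unless `3 ∣ n + 1`,
when the relation `I` adds the leading bit to the second bit (at index `n - 2`). -/
def vqMatch (n : ℕ) (x : Fin n → Bool) : Fin n → Bool := fun i =>
  if h : 3 ∣ n + 1 ∧ i.val + 2 = n then xor (x i) (x ⟨i.val + 1, by omega⟩) else x i

lemma vqMatch_of_not_dvd {n : ℕ} (h : ¬ 3 ∣ n + 1) (x : Fin n → Bool) : vqMatch n x = x := by
  funext i
  simp [vqMatch, h]

lemma vqMatch_involutive (n : ℕ) : Function.Involutive (vqMatch n) := by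
  intro x
  funext i
  by_cases h : 3 ∣ n + 1 ∧ i.val + 2 = n
  · simp [vqMatch, h, show ¬ i.val + 1 + 2 = n by omega]
  · simp only [vqMatch, h, dite_false]

lemma vqCross_iff (a b c d : Bool) : vqCross (a, b) (c, d) ↔ c = a ∧ d = xor b a := by
  unfold vqCross
  decide +revert

lemma eq_vqMatch_iff_of_dvd {n : ℕ} (h : 3 ∣ n + 3) {x y : Fin (n + 2) → Bool} :
    y = vqMatch (n + 2) x ↔ (∀ i : Fin (n + 2), i.val < n → y i = x i) ∧
      y ⟨n + 1, by omega⟩ = x ⟨n + 1, by omega⟩ ∧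
      y ⟨n, by omega⟩ = xor (x ⟨n, by omega⟩) (x ⟨n + 1, by omega⟩) := by
  have h' : 3 ∣ n + 2 + 1 := h
  constructor
  · rintro rfl
    refine ⟨fun i hi => ?_, ?_, ?_⟩
    · simp [vqMatch, hi.ne]
    · simp [vqMatch]
    · simp [vqMatch, h']
  · rintro ⟨hlow, htop, hsecond⟩
    funext i
    obtain ⟨i, hi⟩ := i
    obtain hin | rfl | rfl : i < n ∨ i = n + 1 ∨ i = n := by omega
    · simp [vqMatch, hin.ne, hlow ⟨i, hi⟩ hin]
    · simp [vqMatch, htop]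
    · simp [vqMatch, h', hsecond]

lemma vqAdj_succ {n : ℕ} {x y : Fin (n + 1) → Bool} :
    vqAdj (n + 1) x y ↔
      if x (Fin.last n) = y (Fin.last n) then vqAdj n (Fin.init x) (Fin.init y)
      else Fin.init y = vqMatch n (Fin.init x) := by
  obtain _ | n := n
  · rw [vqAdj, vqAdj]
    simp [funext_iff, Fin.forall_fin_one]
  rw [vqAdj]
  split_ifs with hlast hdvd
  · rfl
  · obtain ⟨n, rfl⟩ : ∃ k, n = k + 1 := ⟨n - 1, by omega⟩
    rw [eq_vqMatch_iff_of_dvd hdvd, vqCross_iff]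
    exact and_congr ⟨fun h i hi => (h i.castSucc hi).symm,
      fun h i hi => (h ⟨i, by omega⟩ hi).symm⟩ Iff.rfl
  · rw [vqMatch_of_not_dvd hdvd, eq_comm, funext_iff]
    rfl

lemma eq_iff_init_eq_and_last_eq {α : Type*} {n : ℕ} {x y : Fin (n + 1) → α} :
    x = y ↔ Fin.init x = Fin.init y ∧ x (Fin.last n) = y (Fin.last n) := by
  rw [← Fin.snoc_init_self x, ← Fin.snoc_init_self y, Fin.snoc_inj]
  simp only [Fin.init_snoc, Fin.snoc_last]

lemma varietalCube_adj_succ {n : ℕ} {x y : Fin (n + 1) → Bool} :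
    (varietalCube (n + 1)).Adj x y ↔
      if x (Fin.last n) = y (Fin.last n) then (varietalCube n).Adj (Fin.init x) (Fin.init y)
      else Fin.init y = vqMatch n (Fin.init x) := by
  simp only [varietalCube, SimpleGraph.fromRel_adj, vqAdj_succ, ne_eq, eq_iff_init_eq_and_last_eq]
  by_cases h : x (Fin.last n) = y (Fin.last n)
  · simp [h]
  · simp only [h, Ne.symm h, if_false, and_false, not_false_eq_true, true_and]
    rw [eq_comm (b := vqMatch n (Fin.init y)), (vqMatch_involutive n).eq_iff, eq_comm, or_self]

lemma exists_varietalCube_adj {n : ℕ} (hn : n ≠ 0) (x : Fin n → Bool) :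
    ∃ y, (varietalCube n).Adj x y := by
  obtain ⟨n, rfl⟩ := Nat.exists_eq_succ_of_ne_zero hn
  refine ⟨Fin.snoc (α := fun _ => Bool) (vqMatch n (Fin.init x)) (!x (Fin.last n)), ?_⟩
  simp [varietalCube_adj_succ]

lemma vqMatch_append {m n : ℕ} (hm : 3 ∣ m) (p : Fin m → Bool) (x : Fin n → Bool) :
    vqMatch (m + n) (Fin.append p x) = Fin.append p (vqMatch n x) := by
  funext i
  refine Fin.addCases (fun i => ?_) (fun i => ?_) i
  · have h : ¬ (3 ∣ m + n + 1 ∧ i.val + 2 = m + n) := by omega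
    simp [vqMatch, h]
  · have hiff : (3 ∣ m + n + 1 ∧ m + i.val + 2 = m + n) ↔ 3 ∣ n + 1 ∧ i.val + 2 = n := by omega
    by_cases h : 3 ∣ n + 1 ∧ i.val + 2 = n
    · have hnext : Fin.append p x ⟨m + i.val + 1, by omega⟩ = x ⟨i.val + 1, by omega⟩ :=
        Fin.append_right p x ⟨i.val + 1, by omega⟩
      simp [vqMatch, hiff, h, hnext]
    · simp [vqMatch, hiff, h]

lemma init_append {α : Type*} {m n : ℕ} (p : Fin m → α) (x : Fin (n + 1) → α) :
    Fin.init (n := m + n) (α := fun _ => α) (Fin.append p x : Fin (m + (n + 1)) → α) =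
      Fin.append p (Fin.init x) := by
  rw [← Fin.snoc_init_self x, Fin.append_snoc, Fin.init_snoc, Fin.init_snoc]

lemma append_inj {α : Type*} {m n : ℕ} {p q : Fin m → α} {x y : Fin n → α} :
    Fin.append p x = Fin.append q y ↔ p = q ∧ x = y :=
  (Fin.appendEquiv m n).injective.eq_iff.trans Prod.mk_inj

lemma varietalCube_adj_append {m n : ℕ} (hm : 3 ∣ m) (p q : Fin m → Bool) (x y : Fin n → Bool) :
    (varietalCube (m + n)).Adj (Fin.append p x) (Fin.append q y) ↔
      (varietalCube m □ varietalCube n).Adj (p, x) (q, y) := by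
  induction n with
  | zero =>
    have hx : x = y := Subsingleton.elim x y
    simp [boxProd_adj, Fin.append_right_nil, hx]
  | succ n ih =>
    have hlast (p : Fin m → Bool) (x : Fin (n + 1) → Bool) :
        Fin.append p x (Fin.last (m + n)) = x (Fin.last n) := Fin.append_right p x (Fin.last n)
    refine (varietalCube_adj_succ (n := m + n)).trans ?_
    simp only [hlast, init_append, vqMatch_append hm, append_inj, ih, boxProd_adj,
      varietalCube_adj_succ, eq_iff_init_eq_and_last_eq (x := x)]
    split_ifs with h <;> simp [h, eq_comm, and_comm]

/-- The splitting of `VQ_{m+n}` into its `m` lowest and `n` highest coordinates, for `3 ∣ m`. -/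
def varietalCubeBoxProdIso {m : ℕ} (hm : 3 ∣ m) (n : ℕ) :
    (varietalCube m □ varietalCube n) ≃g varietalCube (m + n) where
  toEquiv := Fin.appendEquiv m n
  map_rel_iff' {a b} := varietalCube_adj_append hm a.1 b.1 a.2 b.2

lemma two_pow_sub_one_mem_edgePathLengths {k : ℕ} (hk : k ≠ 0) :
    2 ^ k - 1 ∈ edgePathLengths (2 ^ k) := by
  obtain ⟨j, rfl⟩ := Nat.exists_eq_succ_of_ne_zero hk
  have := Nat.one_le_two_pow (n := j)
  rw [mem_edgePathLengths, Nat.succ_eq_add_one, pow_succ]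
  omega

theorem hasEdgePaths_varietalCube {n : ℕ} (hn : n ≠ 0) :
    HasEdgePaths (varietalCube n) (2 ^ n) := by
  induction n using Nat.strong_induction_on with
  | h n ih =>
  obtain rfl | rfl | rfl | hn4 : n = 1 ∨ n = 2 ∨ n = 3 ∨ 4 ≤ n := by omega
  · intro u v huv m hm
    fin_cases hm
    exact .of_adj huv
  · exact hasEdgePaths_varietalCube_two
  · exact hasEdgePaths_wagnerGraph.of_iso wagnerIso.symm
  · obtain ⟨k, rfl⟩ := Nat.exists_eq_add_of_le (show 3 ≤ n by omega)
    have hk : k ≠ 0 := by omega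
    have hbox : HasEdgePaths (varietalCube 3 □ varietalCube k) (8 * 2 ^ k) :=
      (hasEdgePaths_wagnerGraph.of_iso wagnerIso.symm).boxProd (by norm_num)
        (hasPentagons_wagnerGraph.of_iso wagnerIso.symm) (ih k (by omega) hk)
        (two_pow_sub_one_mem_edgePathLengths hk) (exists_varietalCube_adj hk)
    rw [pow_add]
    exact hbox.of_iso (varietalCubeBoxProdIso dvd_rfl k)

end VarietalCube

/-- Every edge of `VQ_n` (`n ≥ 2`) lies on cycles of every length from `4` to `2^n`
except `5`; in particular, `VQ_n` is `6`-edge-pancyclic for `n ≥ 3`. -/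
theorem stmt0 (n : ℕ) (hn : 2 ≤ n) :
    (∀ e ∈ (varietalCube n).edgeSet, ∀ ℓ : ℕ, 4 ≤ ℓ → ℓ ≤ 2 ^ n → ℓ ≠ 5 →
      ∃ (v : Fin n → Bool) (C : (varietalCube n).Walk v v),
        C.IsCycle ∧ C.length = ℓ ∧ e ∈ C.edges) ∧
    (3 ≤ n → ∀ e ∈ (varietalCube n).edgeSet, ∀ ℓ : ℕ, 6 ≤ ℓ → ℓ ≤ 2 ^ n →
      ∃ (v : Fin n → Bool) (C : (varietalCube n).Walk v v),
        C.IsCycle ∧ C.length = ℓ ∧ e ∈ C.edges) := by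
  have key : ∀ e ∈ (varietalCube n).edgeSet, ∀ ℓ : ℕ, 4 ≤ ℓ → ℓ ≤ 2 ^ n → ℓ ≠ 5 →
      ∃ (v : Fin n → Bool) (C : (varietalCube n).Walk v v),
        C.IsCycle ∧ C.length = ℓ ∧ e ∈ C.edges := by
    rintro ⟨u, v⟩ huv ℓ h4 hℓ h5
    obtain ⟨m, rfl⟩ : ∃ m, ℓ = m + 1 := ⟨ℓ - 1, by omega⟩
    have hm : m ∈ edgePathLengths (2 ^ n) := mem_edgePathLengths.2 (by omega)
    exact (hasEdgePaths_varietalCube (by omega) huv m hm).exists_isCycle huv (by omega)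
  exact ⟨key, fun _ e he ℓ h6 hℓ => key e he ℓ (by omega) hℓ (by omega)⟩
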